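/- arXiv:math/0110204 — 5 statements merged into one kernel-verified Lean document; each statement's English description precedes it below -/
import Mathlib

section
/- There is no injective group homomorphism from the symmetric group on 4 letters into GL(2, ℂ). (This is the group-theoretic content of the paper's Lemma that the octahedral subgroup K = S₄ of PGL(2, ℂ) is of non-splitting type: a splitting would give a lifting of S₄ to a subgroup of GL(2, ℂ) isomorphic to S₄, which is impossible.) -/
/-!
The three double transpositions `a`, `b`, `a * b` of `S₄` are conjugate to one another, so under a
homomorphism to `GL₂(R)` their images have a common determinant `δ` with `δ = δ * δ`, that is
`δ = 1`. A `2 × 2` involution of determinant `1` equals its own adjugate, hence is scalar as soon as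
`2` is regular in `R`. Central elements are conjugate only to themselves, so `a` and `b` have the
same image.
-/

section Monoid

variable {M N : Type*} [Monoid M] [CancelCommMonoid N]

theorem map_eq_one_of_isConj_of_isConj_mul (φ : M →* N) {a b : M} (hab : IsConj a b)
    (haab : IsConj a (a * b)) : φ a = 1 := by
  have map_b : φ a = φ b := isConj_iff_eq.mp (φ.map_isConj hab)
  have map_ab : φ a = φ a * φ b := by
    rw [← map_mul]
    exact isConj_iff_eq.mp (φ.map_isConj haab)
  rw [map_b]
  exact left_eq_mul.mp map_ab

end Monoid

section Matrix

open Matrix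

variable {R : Type*} [CommRing R]

theorem adjugate_eq_det_smul_of_sq_eq_one {n : Type*} [Fintype n] [DecidableEq n]
    {A : Matrix n n R} (hA : A ^ 2 = 1) : A.adjugate = A.det • A :=
  calc A.adjugate = A.adjugate * A * A := by rw [mul_assoc, ← sq, hA, mul_one]
    _ = A.det • A := by rw [adjugate_mul, smul_mul_assoc, one_mul]

theorem mem_range_scalar_of_adjugate_eq_self (h2 : IsRegular (2 : R))
    {A : Matrix (Fin 2) (Fin 2) R} (hA : A.adjugate = A) : A ∈ Set.range (scalar (Fin 2)) := by
  have eq_zero_of_neg_eq {x : R} (hx : -x = x) : x = 0 :=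
    h2.left.mul_left_eq_zero_iff.mp (by linear_combination -hx)
  rw [adjugate_fin_two] at hA
  have diag : A 1 1 = A 0 0 := congr_fun₂ hA 0 0
  have upper : A 0 1 = 0 := eq_zero_of_neg_eq (congr_fun₂ hA 0 1)
  have lower : A 1 0 = 0 := eq_zero_of_neg_eq (congr_fun₂ hA 1 0)
  refine ⟨A 0 0, ?_⟩
  ext i j
  fin_cases i <;> fin_cases j <;> simp [diag, upper, lower]

theorem mem_center_of_sq_eq_one_of_det_eq_one (h2 : IsRegular (2 : R)) {g : GL (Fin 2) R}
    (hg : g ^ 2 = 1) (hdet : GeneralLinearGroup.det g = 1) :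
    g ∈ Subgroup.center (GL (Fin 2) R) := by
  have val_sq : g.val ^ 2 = 1 := congr_arg Units.val hg
  have val_det : g.val.det = 1 := congr_arg Units.val hdet
  have adjugate_eq : g.val.adjugate = g.val := by
    rw [adjugate_eq_det_smul_of_sq_eq_one val_sq, val_det, one_smul]
  exact GeneralLinearGroup.mem_center_iff_val_mem_range_scalar.mpr
    (mem_range_scalar_of_adjugate_eq_self h2 adjugate_eq)

theorem eq_of_sq_eq_one_of_isConj_of_isConj_mul (h2 : IsRegular (2 : R)) {g h : GL (Fin 2) R}
    (hg : g ^ 2 = 1) (hgh : IsConj g h) (hggh : IsConj g (g * h)) : g = h :=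
  have hdet : GeneralLinearGroup.det g = 1 := map_eq_one_of_isConj_of_isConj_mul _ hgh hggh
  hgh.eq_of_left_mem_center (mem_center_of_sq_eq_one_of_det_eq_one h2 hg hdet)

end Matrix

theorem exists_perm_fin_four_ne_and_sq_eq_one_and_isConj_and_isConj_mul :
    ∃ a b : Equiv.Perm (Fin 4), a ≠ b ∧ a ^ 2 = 1 ∧ IsConj a b ∧ IsConj a (a * b) :=
  ⟨Equiv.swap 0 1 * Equiv.swap 2 3, Equiv.swap 0 2 * Equiv.swap 1 3, by decide, by decide,
    isConj_iff.mpr ⟨Equiv.swap 1 2, by decide⟩, isConj_iff.mpr ⟨Equiv.swap 1 3, by decide⟩⟩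

theorem no_injective_hom_S4_to_GL2C_general {R : Type*} [CommRing R] (h2 : IsRegular (2 : R)) :
    ¬ ∃ f : Equiv.Perm (Fin 4) →* GL (Fin 2) R, Function.Injective f := by
  rintro ⟨f, hf⟩
  obtain ⟨a, b, hne, ha, hab, haab⟩ :=
    exists_perm_fin_four_ne_and_sq_eq_one_and_isConj_and_isConj_mul
  have map_sq : f a ^ 2 = 1 := by rw [← map_pow, ha, map_one]
  have map_isConj_mul : IsConj (f a) (f a * f b) := map_mul f a b ▸ f.map_isConj haab
  exact hne (hf (eq_of_sq_eq_one_of_isConj_of_isConj_mul h2 map_sq (f.map_isConj hab)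
    map_isConj_mul))

/-- There is no injective group homomorphism from the symmetric group on 4 letters
into `GL(2, ℂ)`. -/
theorem no_injective_hom_S4_to_GL2C :
    ¬ ∃ f : Equiv.Perm (Fin 4) →* GL (Fin 2) ℂ, Function.Injective f :=
  no_injective_hom_S4_to_GL2C_general (IsRegular.of_ne_zero two_ne_zero)
end

section
/- Let n ≥ 1 be an integer and let ξ = exp(2πi/n). There exists an injective group homomorphism ε from the dihedral group of order 2n into GL(2, ℂ) such that ε sends the rotation generator to a nonzero scalar multiple of the diagonal matrix diag(1, ξ) and the reflection generator to a nonzero scalar multiple of the matrix [[0,1],[1,0]], if and only if n is odd. (Lemma: the dihedral subgroup D_n of PGL(2, ℂ) is splitting if and only if n is odd.) -/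
/-!
Suppose `r ↦ c • diag(1, ξ)` and `s ↦ d • [[0, 1], [1, 0]]` extend to a homomorphism. Then `s² = 1`
gives `d² = 1`, so `(s r)² = 1` becomes `c² ξ = 1`, while `rⁿ = 1` gives `cⁿ = 1`. If `n = 2 m`,
then `ξᵐ = cⁿ ξᵐ = (c² ξ)ᵐ = 1`, which contradicts the primitivity of `ξ`. If `n = 2 m + 1`, then
`c = ξᵐ` is again a primitive `n`-th root of unity, it satisfies `c² ξ = 1`, and
`c • diag(1, ξ) = diag(c, c⁻¹)`, so the required lift is the faithful representation of the dihedral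
group induced from the character `r ↦ c` of the rotation subgroup.
-/

open DihedralGroup Matrix

section RootsOfUnity

variable {M : Type*} [CommMonoid M] {ξ c : M} {n : ℕ}

theorem odd_of_pow_eq_one_of_sq_mul_eq_one (hn : n ≠ 0) (hξ : IsPrimitiveRoot ξ n)
    (hc : c ^ n = 1) (hcξ : c ^ 2 * ξ = 1) : Odd n := by
  by_contra hodd
  obtain ⟨m, rfl⟩ := even_iff_exists_two_mul.mp (Nat.not_odd_iff_even.mp hodd)
  have hξm : ξ ^ m = 1 := calc
    ξ ^ m = c ^ (2 * m) * ξ ^ m := by rw [hc, one_mul]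
    _ = (c ^ 2 * ξ) ^ m := by rw [mul_pow, pow_mul]
    _ = 1 := by rw [hcξ, one_pow]
  exact hξ.pow_ne_one_of_pos_of_lt (by lia) (by lia) hξm

theorem exists_isPrimitiveRoot_sq_mul_eq_one (hξ : IsPrimitiveRoot ξ n) (hn : Odd n) :
    ∃ c : M, IsPrimitiveRoot c n ∧ c ^ 2 * ξ = 1 := by
  obtain ⟨m, rfl⟩ := hn
  refine ⟨ξ ^ m, hξ.pow_of_coprime m (by simp), ?_⟩
  rw [← pow_mul, mul_comm m, ← pow_succ, hξ.pow_eq_one]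

theorem zmodChar_injective [NeZero n] (hc : IsPrimitiveRoot c n) :
    Function.Injective (AddChar.zmodChar n hc.pow_eq_one) := fun i j hij =>
  ZMod.val_injective n (hc.pow_inj i.val_lt j.val_lt hij)

end RootsOfUnity

section DihedralRep

variable {R : Type*} [CommRing R] {n : ℕ}

/-- The two-dimensional matrix representation of the dihedral group induced from a character `ψ`
of its rotation subgroup, identified with `ZMod n`. The reflection `sr i` is the product
`sr 0 * r i`, and `sr 0` swaps the two basis vectors. -/
def dihedralRep (ψ : AddChar (ZMod n) R) : DihedralGroup n →* Matrix (Fin 2) (Fin 2) R where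
  toFun
    | r i => !![ψ i, 0; 0, ψ (-i)]
    | sr i => !![0, ψ (-i); ψ i, 0]
  map_one' := by
    rw [one_def]
    simp [one_fin_two]
  map_mul' := by
    rintro (i | i) (j | j) <;> simp [← AddChar.map_add_eq_mul, sub_eq_add_neg, add_comm]

theorem dihedralRep_r (ψ : AddChar (ZMod n) R) (i : ZMod n) :
    dihedralRep ψ (r i) = !![ψ i, 0; 0, ψ (-i)] := rfl

theorem dihedralRep_sr (ψ : AddChar (ZMod n) R) (i : ZMod n) :
    dihedralRep ψ (sr i) = !![0, ψ (-i); ψ i, 0] := rfl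

theorem dihedralRep_sr_zero (ψ : AddChar (ZMod n) R) :
    dihedralRep ψ (sr 0) = !![0, 1; 1, 0] := by
  simp [dihedralRep_sr]

theorem dihedralRep_r_one (ψ : AddChar (ZMod n) R) {ξ : R} (hξ : ψ 1 ^ 2 * ξ = 1) :
    dihedralRep ψ (r 1) = ψ 1 • diagonal ![1, ξ] := by
  have hψ : ψ 1 * ψ (-1) = 1 := by rw [← AddChar.map_add_eq_mul, add_neg_cancel, ψ.map_zero_eq_one]
  have hψ_neg : ψ (-1) = ψ 1 * ξ := by linear_combination ψ 1 * ξ * hψ - ψ (-1) * hξ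
  ext i j
  fin_cases i <;> fin_cases j <;> simp [dihedralRep_r, hψ_neg]

theorem dihedralRep_injective [Nontrivial R] {ψ : AddChar (ZMod n) R}
    (hψ : Function.Injective ψ) : Function.Injective (dihedralRep ψ) := by
  have hψ_ne (i : ZMod n) : ψ i ≠ 0 := (ψ.val_isUnit i).ne_zero
  rintro (i | i) (j | j) hij
  all_goals
    have h₀ := congrFun₂ hij 0 0
    have h₁ := congrFun₂ hij 1 0
    simp only [dihedralRep_r, dihedralRep_sr, of_apply, cons_val', cons_val_zero, cons_val_one,
      cons_val_fin_one] at h₀ h₁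
  · rw [hψ h₀]
  · exact absurd h₀ (hψ_ne i)
  · exact absurd h₀.symm (hψ_ne j)
  · rw [hψ h₁]

theorem pow_eq_one_of_map_r_one (ρ : DihedralGroup n →* Matrix (Fin 2) (Fin 2) R) {c ξ : R}
    (hr : ρ (r 1) = c • diagonal ![1, ξ]) : c ^ n = 1 := by
  have hpow : (c • diagonal ![1, ξ]) ^ n = 1 := by rw [← hr, ← map_pow, r_one_pow_n, map_one]
  rw [smul_pow, diagonal_pow] at hpow
  simpa using congrFun₂ hpow 0 0

theorem sq_mul_eq_one_of_map_r_one_of_map_sr_zero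
    (ρ : DihedralGroup n →* Matrix (Fin 2) (Fin 2) R) {c d ξ : R}
    (hr : ρ (r 1) = c • diagonal ![1, ξ]) (hs : ρ (sr 0) = d • !![0, 1; 1, 0]) :
    c ^ 2 * ξ = 1 := by
  have hss : ρ (sr 0) * ρ (sr 0) = 1 := by rw [← map_mul, sr_mul_self, map_one]
  have hsr : (ρ (sr 0) * ρ (r 1)) * (ρ (sr 0) * ρ (r 1)) = 1 := by
    rw [← map_mul, ← map_mul, sr_mul_r, sr_mul_self, map_one]
  have hd : d * d = 1 := by
    simpa [hs] using congrFun₂ hss 0 0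
  have hdc : c * (d * ξ) * (c * d) = 1 := by
    simpa [hs, hr, Matrix.mul_apply, vecMul_diagonal] using congrFun₂ hsr 0 0
  linear_combination hdc - c ^ 2 * ξ * hd

end DihedralRep

theorem dihedral_lifting_iff_odd_general {R : Type*} [CommRing R] [Nontrivial R] {n : ℕ}
    (hn : n ≠ 0) {ξ : R} (hξ : IsPrimitiveRoot ξ n) :
    (∃ ε : DihedralGroup n →* GL (Fin 2) R, Function.Injective ε ∧
      (∃ c : R, c ≠ 0 ∧ (ε (r 1) : Matrix (Fin 2) (Fin 2) R) = c • diagonal ![1, ξ]) ∧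
      (∃ c : R, c ≠ 0 ∧ (ε (sr 0) : Matrix (Fin 2) (Fin 2) R) = c • !![0, 1; 1, 0])) ↔
    Odd n := by
  constructor
  · rintro ⟨ε, -, ⟨c, -, hr⟩, ⟨d, -, hs⟩⟩
    let ρ := (Units.coeHom (Matrix (Fin 2) (Fin 2) R)).comp ε
    exact odd_of_pow_eq_one_of_sq_mul_eq_one hn hξ (pow_eq_one_of_map_r_one ρ hr)
      (sq_mul_eq_one_of_map_r_one_of_map_sr_zero ρ hr hs)
  · intro hodd
    have : NeZero n := ⟨hn⟩
    obtain ⟨c, hc, hcξ⟩ := exists_isPrimitiveRoot_sq_mul_eq_one hξ hodd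
    let ψ := AddChar.zmodChar n hc.pow_eq_one
    have hψ_one : ψ 1 = c := by simpa using AddChar.zmodChar_apply' hc.pow_eq_one 1
    refine ⟨(dihedralRep ψ).toHomUnits, fun g h hgh => ?_,
      ⟨ψ 1, (ψ.val_isUnit 1).ne_zero, dihedralRep_r_one ψ (by rwa [hψ_one])⟩,
      ⟨1, one_ne_zero, by rw [one_smul]; exact dihedralRep_sr_zero ψ⟩⟩
    exact dihedralRep_injective (zmodChar_injective hc) (congrArg Units.val hgh)

/-- Let `n ≥ 1` and `ξ = exp(2πi/n)`.  There is an injective group homomorphism `ε`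
from the dihedral group of order `2n` into `GL(2, ℂ)` sending the rotation generator
to a nonzero scalar multiple of `diag(1, ξ)` and the reflection generator to a nonzero
scalar multiple of `[[0,1],[1,0]]`, if and only if `n` is odd. -/
theorem dihedral_lifting_iff_odd (n : ℕ) (hn : 1 ≤ n) :
    (∃ ε : DihedralGroup n →* GL (Fin 2) ℂ, Function.Injective ε ∧
      (∃ c : ℂ, c ≠ 0 ∧ (ε (DihedralGroup.r 1) : Matrix (Fin 2) (Fin 2) ℂ) =
        c • Matrix.diagonal ![1, Complex.exp (2 * Real.pi * Complex.I / n)]) ∧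
      (∃ c : ℂ, c ≠ 0 ∧ (ε (DihedralGroup.sr 0) : Matrix (Fin 2) (Fin 2) ℂ) =
        c • !![0, 1; 1, 0])) ↔ Odd n := by
  exact dihedral_lifting_iff_odd_general (by lia) (Complex.isPrimitiveRoot_exp n (by lia))
end

section
/- Let K be a finite subgroup of PGL(2, ℂ) and let β be a nonzero homogeneous polynomial of degree 6 in two variables x₀, x₁ over ℂ such that for every g ∈ GL(2, ℂ) with π(g) ∈ K, the polynomial β∘g is a nonzero scalar multiple of β. Then there exists a unique subgroup G of GL(2, ℂ) such that: (i) π(G) = K and the kernel of the restriction of π to G is exactly {Id, −Id}, and (ii) β∘g = (det g)²·β for every g ∈ G. (Proposition: existence and uniqueness of the extendable group acting on ℂ[x₀, x₁, z]/(z² − β) determined by the pair (K, β).) -/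
/-- `PGL(2, ℂ)`: the quotient of `GL(2, ℂ)` by its center (the nonzero scalar matrices). -/
abbrev PGL2C := GL (Fin 2) ℂ ⧸ Subgroup.center (GL (Fin 2) ℂ)

/-- The canonical projection `π : GL(2, ℂ) → PGL(2, ℂ)`. -/
def projGL2 : GL (Fin 2) ℂ →* PGL2C := QuotientGroup.mk' (Subgroup.center (GL (Fin 2) ℂ))

/-- `β ∘ g`: the polynomial obtained from `β` by substituting
`(g₀₀x₀ + g₀₁x₁, g₁₀x₀ + g₁₁x₁)` for `(x₀, x₁)`. -/
noncomputable def polyComp (g : GL (Fin 2) ℂ) (β : MvPolynomial (Fin 2) ℂ) :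
    MvPolynomial (Fin 2) ℂ :=
  MvPolynomial.aeval
    (fun i => ∑ j, MvPolynomial.C ((g : Matrix (Fin 2) (Fin 2) ℂ) i j) * MvPolynomial.X j) β

/-!
Let `β` be homogeneous of degree `d`, and let `χ` be a character of `GL n F` with
`χ (u • 1) = u ^ e`. On the preimage of `K`, the factor by which `g` scales `β`, divided by `χ g`,
is a character whose value at the scalar matrix `u • 1` is `u ^ (d - e)`. Over an algebraically
closed field every unit has the form `u ^ (d - e)` once `d ≠ e`, so each coset of the scalars inside
the preimage of `K` meets the kernel of this character: the kernel surjects onto `K`, and its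
scalars are exactly the `u • 1` with `u ^ (d - e) = 1`. Any competing group lies in the kernel, has
the same image `K` and contains the same scalars, so it is the whole kernel. For `χ = det ^ 2` on
`GL(2, ℂ)` and `d = 6` the exponent `d - e` is `6 - 4 = 2`.
-/

open MvPolynomial
open Matrix (GeneralLinearGroup ProjGenLinGroup toMvPolynomial_mul toMvPolynomial_one)

theorem eq_of_le_of_map_le_of_inf_ker_le {G N : Type*} [Group G] [Group N] {f : G →* N}
    {H H' : Subgroup G} (hle : H ≤ H') (hmap : H'.map f ≤ H.map f) (hker : H' ⊓ f.ker ≤ H) :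
    H = H' := by
  refine le_antisymm hle fun g hg ↦ ?_
  obtain ⟨h, hh, hfh⟩ := hmap ⟨g, hg, rfl⟩
  have hquot : h⁻¹ * g ∈ f.ker := by rw [MonoidHom.mem_ker, map_mul, map_inv, hfh, inv_mul_cancel]
  exact (H.mul_mem_cancel_left (H.inv_mem hh)).1
    (hker ⟨H'.mul_mem (H'.inv_mem (hle hh)) hg, hquot⟩)

theorem units_zpow_surjective {F : Type*} [Field F] [IsAlgClosed F] {z : ℤ} (hz : z ≠ 0) :
    Function.Surjective fun u : Fˣ ↦ u ^ z := by
  have pow_surjective {m : ℕ} (hm : m ≠ 0) : Function.Surjective fun u : Fˣ ↦ u ^ m := by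
    intro a
    obtain ⟨x, hx⟩ := IsAlgClosed.exists_pow_nat_eq (a : F) (Nat.pos_of_ne_zero hm)
    have hx0 : x ≠ 0 := by
      rintro rfl
      exact a.ne_zero (by rw [← hx, zero_pow hm])
    exact ⟨Units.mk0 x hx0, Units.ext hx⟩
  let : RootableBy Fˣ ℕ := rootableByOfPowLeftSurj _ _ pow_surjective
  let : RootableBy Fˣ ℤ := Group.rootableByIntOfRootableByNat Fˣ
  exact RootableBy.surjective_pow Fˣ ℤ hz

section LinearSubstitution

variable {l m n R : Type*} [CommSemiring R]

theorem bind₁_C_mul_X_of_isHomogeneous {β : MvPolynomial n R} {d : ℕ} (hβ : β.IsHomogeneous d)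
    (r : R) : bind₁ (fun i ↦ C r * X i) β = r ^ d • β := by
  conv_lhs => rw [β.as_sum]
  conv_rhs => rw [β.as_sum]
  rw [map_sum, Finset.smul_sum]
  refine Finset.sum_congr rfl fun s hs ↦ ?_
  have hdeg : s.sum (fun _ k ↦ k) = d := by
    simpa [Finsupp.weight_apply] using hβ (mem_support_iff.1 hs)
  have hprod : s.prod (fun _ k ↦ (C r : MvPolynomial n R) ^ k) = C (r ^ d) := by
    rw [C_pow, ← hdeg]
    exact Finset.prod_pow_eq_pow_sum _ _ _
  calc bind₁ (fun i ↦ C r * X i) (monomial s (coeff s β))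
      = C (coeff s β) * s.prod fun i k ↦ C r ^ k * X i ^ k := by
        simp only [bind₁_monomial, mul_pow, Finsupp.prod]
    _ = r ^ d • monomial s (coeff s β) := by
        rw [Finsupp.prod_mul, hprod, smul_eq_C_mul, monomial_eq, mul_left_comm]

variable [Fintype n]

theorem bind₁_toMvPolynomial_mul [Fintype m] (A : Matrix l m R) (B : Matrix m n R)
    (β : MvPolynomial l R) :
    bind₁ (A * B).toMvPolynomial β = bind₁ B.toMvPolynomial (bind₁ A.toMvPolynomial β) := by
  rw [bind₁_bind₁, funext (toMvPolynomial_mul A B)]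

variable [DecidableEq n]

theorem bind₁_toMvPolynomial_one (β : MvPolynomial n R) :
    bind₁ (1 : Matrix n n R).toMvPolynomial β = β := by
  rw [toMvPolynomial_one, bind₁_X_left, AlgHom.id_apply]

theorem bind₁_toMvPolynomial_injective (g : GL n R) :
    Function.Injective (bind₁ g.1.toMvPolynomial : MvPolynomial n R → MvPolynomial n R) :=
  Function.LeftInverse.injective (g := bind₁ (g⁻¹).1.toMvPolynomial) fun β ↦ by
    rw [← bind₁_toMvPolynomial_mul, Units.mul_inv, bind₁_toMvPolynomial_one]

theorem toMvPolynomial_scalar (r : R) :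
    (Matrix.scalar n r).toMvPolynomial = fun i ↦ C r * X i := by
  ext1 i
  simp [Matrix.toMvPolynomial, Matrix.diagonal_apply, C_mul_X_eq_monomial, apply_ite]

theorem bind₁_toMvPolynomial_scalar {β : MvPolynomial n R} {d : ℕ} (hβ : β.IsHomogeneous d)
    (u : Rˣ) : bind₁ (GeneralLinearGroup.scalar n u).1.toMvPolynomial β = u ^ d • β := by
  rw [GeneralLinearGroup.coe_scalar, toMvPolynomial_scalar, bind₁_C_mul_X_of_isHomogeneous hβ,
    Units.smul_def, Units.val_pow_eq_pow_val]

end LinearSubstitution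

section SemiInvariants

open scoped MatrixGroups

variable {n : Type*} [Fintype n] [DecidableEq n]

section Subgroup

variable {R : Type*} [CommSemiring R]

/-- The matrices `g` for which `β` is a semi-invariant of weight `χ`, that is, for which
substituting `∑ j, g i j * X j` for every `X i` multiplies `β` by `χ g`. -/
def semiInvariantSubgroup (χ : GL n R →* Rˣ) (β : MvPolynomial n R) : Subgroup (GL n R) where
  carrier := {g | bind₁ g.1.toMvPolynomial β = χ g • β}
  one_mem' := by
    change _ = _
    rw [Units.val_one, bind₁_toMvPolynomial_one, map_one, one_smul]
  mul_mem' {g h} (hg : _ = _) (hh : _ = _) := by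
    change _ = _
    rw [Units.val_mul, bind₁_toMvPolynomial_mul, hg, Units.smul_def, map_smul, hh,
      ← Units.smul_def, smul_smul, map_mul]
  inv_mem' {g} (hg : _ = _) := by
    change _ = _
    apply bind₁_toMvPolynomial_injective g
    rw [← bind₁_toMvPolynomial_mul, Units.inv_mul, bind₁_toMvPolynomial_one, Units.smul_def,
      map_smul, hg, ← Units.smul_def, smul_smul, map_inv, inv_mul_cancel, one_smul]

theorem mem_semiInvariantSubgroup {χ : GL n R →* Rˣ} {β : MvPolynomial n R} {g : GL n R} :
    g ∈ semiInvariantSubgroup χ β ↔ bind₁ g.1.toMvPolynomial β = χ g • β :=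
  Iff.rfl

end Subgroup

theorem scalar_mem_semiInvariantSubgroup_iff {R : Type*} [CommRing R] [IsDomain R]
    {χ : GL n R →* Rˣ} {e : ℤ} {β : MvPolynomial n R} {d : ℕ}
    (hχ : ∀ u, χ (GeneralLinearGroup.scalar n u) = u ^ e) (hβ0 : β ≠ 0) (hβ : β.IsHomogeneous d)
    (u : Rˣ) :
    GeneralLinearGroup.scalar n u ∈ semiInvariantSubgroup χ β ↔ u ^ (d - e : ℤ) = 1 := by
  rw [mem_semiInvariantSubgroup, bind₁_toMvPolynomial_scalar hβ, hχ, Units.smul_def,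
    Units.smul_def, smul_left_inj hβ0, Units.val_inj, zpow_sub, mul_inv_eq_one, zpow_natCast]

variable {F : Type*} [Field F] [IsAlgClosed F] {χ : GL n F →* Fˣ} {e : ℤ} {β : MvPolynomial n F}
  {d : ℕ}

theorem exists_mul_scalar_mem_semiInvariantSubgroup
    (hχ : ∀ u, χ (GeneralLinearGroup.scalar n u) = u ^ e) (hβ0 : β ≠ 0) (hβ : β.IsHomogeneous d)
    (hde : (d : ℤ) ≠ e) {g : GL n F} {c : F} (hg : bind₁ g.1.toMvPolynomial β = c • β) :
    ∃ u, g * GeneralLinearGroup.scalar n u ∈ semiInvariantSubgroup χ β := by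
  have hc : c ≠ 0 := by
    rintro rfl
    exact hβ0 (bind₁_toMvPolynomial_injective g (by rw [hg, zero_smul, map_zero]))
  lift c to Fˣ using hc.isUnit
  obtain ⟨u, hu : u ^ (d - e : ℤ) = χ g * c⁻¹⟩ :=
    units_zpow_surjective (F := F) (sub_ne_zero.2 hde) _
  have hscale : c * u ^ d = χ g * u ^ e := by
    rw [← zpow_natCast, ← sub_add_cancel (d : ℤ) e, zpow_add, hu, ← mul_assoc,
      mul_inv_cancel_comm_assoc]
  refine ⟨u, ?_⟩
  rw [mem_semiInvariantSubgroup, Units.val_mul, bind₁_toMvPolynomial_mul, hg, map_smul,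
    bind₁_toMvPolynomial_scalar hβ, ← Units.smul_def, smul_smul, hscale, map_mul, hχ]

theorem le_map_mk_semiInvariantSubgroup {K : Subgroup PGL(n, F)}
    (hχ : ∀ u, χ (GeneralLinearGroup.scalar n u) = u ^ e) (hβ0 : β ≠ 0) (hβ : β.IsHomogeneous d)
    (hde : (d : ℤ) ≠ e)
    (hK : ∀ g, ProjGenLinGroup.mk g ∈ K → ∃ c : F, bind₁ g.1.toMvPolynomial β = c • β) :
    K ≤ (semiInvariantSubgroup χ β).map ProjGenLinGroup.mk := by
  intro k hk
  obtain ⟨g, rfl⟩ := ProjGenLinGroup.mk_surjective k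
  obtain ⟨c, hc⟩ := hK g hk
  obtain ⟨u, hu⟩ := exists_mul_scalar_mem_semiInvariantSubgroup hχ hβ0 hβ hde hc
  exact ⟨_, hu, by rw [map_mul, ProjGenLinGroup.mk_scalar, mul_one]⟩

theorem extendable_group_exists_unique_general (K : Subgroup PGL(n, F))
    (hχ : ∀ u, χ (GeneralLinearGroup.scalar n u) = u ^ e) (hβ0 : β ≠ 0) (hβ : β.IsHomogeneous d)
    (hde : (d : ℤ) ≠ e)
    (hK : ∀ g, ProjGenLinGroup.mk g ∈ K → ∃ c : F, bind₁ g.1.toMvPolynomial β = c • β) :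
    ∃! G : Subgroup (GL n F),
      G.map ProjGenLinGroup.mk = K ∧
      (∀ u, GeneralLinearGroup.scalar n u ∈ G ↔ u ^ (d - e : ℤ) = 1) ∧
      G ≤ semiInvariantSubgroup χ β := by
  have hscalar := scalar_mem_semiInvariantSubgroup_iff hχ hβ0 hβ
  refine ⟨semiInvariantSubgroup χ β ⊓ K.comap ProjGenLinGroup.mk,
    ⟨?_, fun u ↦ ?_, inf_le_left⟩, ?_⟩
  · refine le_antisymm (Subgroup.map_le_iff_le_comap.2 inf_le_right) fun k hk ↦ ?_
    obtain ⟨g, hg, rfl⟩ := le_map_mk_semiInvariantSubgroup hχ hβ0 hβ hde hK hk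
    exact ⟨g, ⟨hg, hk⟩, rfl⟩
  · rw [Subgroup.mem_inf, hscalar, Subgroup.mem_comap, ProjGenLinGroup.mk_scalar]
    exact and_iff_left K.one_mem
  · rintro G ⟨hmap, hG, hGβ⟩
    refine eq_of_le_of_map_le_of_inf_ker_le (f := ProjGenLinGroup.mk)
      (le_inf hGβ (Subgroup.map_le_iff_le_comap.1 hmap.le))
      (hmap ▸ Subgroup.map_le_iff_le_comap.2 inf_le_right) ?_
    rintro g ⟨⟨hgβ, -⟩, hg⟩
    rw [ProjGenLinGroup.ker_mk, GeneralLinearGroup.center_eq_range_scalar] at hg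
    obtain ⟨u, rfl⟩ := hg
    exact (hG u).2 ((hscalar u).1 hgβ)

end SemiInvariants

section Scalars

variable {n R : Type*} [Fintype n] [DecidableEq n] [CommRing R]

theorem det_pow_scalar (k : ℕ) (u : Rˣ) :
    (GeneralLinearGroup.det ^ k : GL n R →* Rˣ) (GeneralLinearGroup.scalar n u) =
      u ^ (Fintype.card n * k : ℤ) := by
  rw [MonoidHom.pow_apply, GeneralLinearGroup.det_scalar, ← pow_mul]
  exact_mod_cast rfl

theorem scalar_injective [Nonempty n] :
    Function.Injective (GeneralLinearGroup.scalar n : Rˣ → GL n R) :=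
  Units.map_injective fun _ _ ↦ Matrix.scalar_inj.1

theorem scalar_neg_one : GeneralLinearGroup.scalar n (-1 : Rˣ) = -1 :=
  Units.ext ((map_neg (Matrix.scalar n) 1).trans (congrArg Neg.neg (map_one (Matrix.scalar n))))

theorem scalar_eq_one_or_eq_neg_one_iff [IsDomain R] [Nonempty n] {u : Rˣ} :
    GeneralLinearGroup.scalar n u = 1 ∨ GeneralLinearGroup.scalar n u = -1 ↔ u ^ 2 = 1 := by
  rw [← scalar_neg_one, ← map_one (GeneralLinearGroup.scalar n), scalar_injective.eq_iff,
    scalar_injective.eq_iff]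
  simp only [Units.ext_iff, Units.val_pow_eq_pow_val, Units.val_one, Units.val_neg, sq_eq_one_iff]

theorem scalar_mem_iff_sq_eq_one_iff [IsDomain R] [Nonempty n] {G : Subgroup (GL n R)} :
    (∀ u, GeneralLinearGroup.scalar n u ∈ G ↔ u ^ 2 = 1) ↔
      -1 ∈ G ∧ ∀ g ∈ G, ProjGenLinGroup.mk g = 1 → g = 1 ∨ g = -1 := by
  simp only [← scalar_eq_one_or_eq_neg_one_iff (n := n), ProjGenLinGroup.mk_eq_one,
    GeneralLinearGroup.center_eq_range_scalar]
  constructor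
  · intro hG
    refine ⟨scalar_neg_one (n := n) (R := R) ▸ (hG (-1)).2 (.inr scalar_neg_one), ?_⟩
    rintro _ hg ⟨u, rfl⟩
    exact (hG u).1 hg
  · rintro ⟨hneg, hG⟩ u
    refine ⟨fun hu ↦ hG _ hu ⟨u, rfl⟩, ?_⟩
    rintro (hu | hu) <;> rw [hu]
    exacts [G.one_mem, hneg]

end Scalars

theorem polyComp_eq_bind₁ (g : GL (Fin 2) ℂ) (β : MvPolynomial (Fin 2) ℂ) :
    polyComp g β = bind₁ g.1.toMvPolynomial β := by
  simp only [polyComp, bind₁, C_mul_X_eq_monomial]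
  rfl

theorem le_semiInvariantSubgroup_det_pow_iff {k : ℕ} {β : MvPolynomial (Fin 2) ℂ}
    {G : Subgroup (GL (Fin 2) ℂ)} :
    G ≤ semiInvariantSubgroup (GeneralLinearGroup.det ^ k) β ↔
      ∀ g ∈ G, polyComp g β = g.1.det ^ k • β := by
  simp only [polyComp_eq_bind₁]
  rfl

/-- Let `K` be a finite subgroup of `PGL(2, ℂ)` and `β` a nonzero homogeneous degree 6
polynomial in `x₀, x₁` whose zero divisor is `K`-invariant.  Then there is a unique
subgroup `G` of `GL(2, ℂ)` with `π(G) = K`, kernel of `π` restricted to `G` exactly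
`{Id, −Id}`, and `β ∘ g = (det g)² · β` for all `g ∈ G`. -/
theorem extendable_group_exists_unique (K : Subgroup PGL2C) (hKfin : Finite K)
    (β : MvPolynomial (Fin 2) ℂ) (hβ0 : β ≠ 0) (hβh : β.IsHomogeneous 6)
    (hinv : ∀ g : GL (Fin 2) ℂ, projGL2 g ∈ K →
      ∃ c : ℂ, c ≠ 0 ∧ polyComp g β = c • β) :
    ∃! G : Subgroup (GL (Fin 2) ℂ),
      Subgroup.map projGL2 G = K ∧
      ((-1 : GL (Fin 2) ℂ) ∈ G ∧ ∀ g ∈ G, projGL2 g = 1 → g = 1 ∨ g = -1) ∧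
      (∀ g ∈ G, polyComp g β = ((g : Matrix (Fin 2) (Fin 2) ℂ).det) ^ 2 • β) := by
  have hexp : (6 : ℕ) - (Fintype.card (Fin 2) : ℤ) * (2 : ℕ) = (2 : ℕ) := by norm_num
  have hG := extendable_group_exists_unique_general K (det_pow_scalar 2) hβ0 hβh (by norm_num)
    fun g hg ↦ (hinv g hg).imp fun c hc ↦ polyComp_eq_bind₁ g β ▸ hc.2
  simp only [hexp, zpow_natCast, scalar_mem_iff_sq_eq_one_iff,
    le_semiInvariantSubgroup_det_pow_iff] at hG
  -- `projGL2` unfolds to `ProjGenLinGroup.mk`.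
  exact hG
end

section
/- Let T = ((i−1)i/2)·[[1, 1],[i, −i]] and U = (1/√2)·[[i−1, 0],[0, i+1]] in GL(2, ℂ), and let H be the subgroup of GL(2, ℂ) generated by T and U. Then: U has order 8 and U⁴ = −Id; H has order 48; and there is a surjective group homomorphism from H onto the symmetric group on 4 letters whose kernel is exactly {Id, −Id} (that is, the image of H in PGL(2, ℂ) is isomorphic to S₄). In particular, H is not isomorphic to S₄ × ℤ/2, since H contains an element of order 8. (This is the second step of the proof classifying extendable groups: the extendable group associated to the octahedral group K = S₄ is H = ⟨T, U⟩.) -/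
/-!
`T` and `U` satisfy `T ^ 3 = (T * U) ^ 2 = 1`, `U ^ 4` is central and `U` has order `8`; in any
group these relations force the conclusion. In the rotation group of the cube `T` is a rotation
about a body diagonal and `U` one about an axis through two opposite faces. Conjugation permutes
the four diagonals `⟨U ^ k * T * U ^ (-k)⟩`, with `U` acting as a 4-cycle and `T * U` as an
adjacent transposition, so `⟨T, U⟩` maps onto `S₄` and `U ^ 4` lies in the kernel. The six cosets
of `⟨U⟩` corresponding to the faces are permuted by `T` and `U`, so `⟨T, U⟩` has at most
`6 * 8 = 48` elements and the kernel is no larger than `{1, U ^ 4}`.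
-/

open Subgroup Equiv MulAction
open scoped Pointwise

section PermutationRepresentation

variable {G α ι : Type*} [Group G]

/-- The graph of the action of `G` on a family `p` of points of `α`: the pairs `(g, σ)` such that
`g`, acting through `φ`, permutes the family by the permutation `σ` of its indices. -/
def indexPermGraph (φ : G →* Perm α) (p : ι → α) : Subgroup (G × Perm ι) where
  carrier := {x | ∀ i, φ x.1 (p i) = p (x.2 i)}
  one_mem' i := by simp
  mul_mem' {x y} hx hy i := by simp [hx _, hy _]
  inv_mem' {x} hx i := by
    rw [Prod.fst_inv, Prod.snd_inv, map_inv, Perm.inv_eq_iff_eq, hx,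
      ← Perm.mul_apply, mul_inv_cancel, Perm.one_apply]

variable {φ : G →* Perm α} {p : ι → α}

lemma mem_indexPermGraph {g : G} {σ : Perm ι} :
    (g, σ) ∈ indexPermGraph φ p ↔ ∀ i, φ g (p i) = p (σ i) :=
  Iff.rfl

lemma eq_of_mem_indexPermGraph (hp : Function.Injective p) {g : G} {σ τ : Perm ι}
    (hσ : (g, σ) ∈ indexPermGraph φ p) (hτ : (g, τ) ∈ indexPermGraph φ p) : σ = τ :=
  Equiv.ext fun i => hp ((hσ i).symm.trans (hτ i))

lemma exists_hom_mem_indexPermGraph (hp : Function.Injective p) {S : Set G}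
    (hS : ∀ s ∈ S, ∃ σ, (s, σ) ∈ indexPermGraph φ p) :
    ∃ f : closure S →* Perm ι, ∀ h : closure S, ((h : G), f h) ∈ indexPermGraph φ p := by
  have hle : closure S ≤ (indexPermGraph φ p).map (MonoidHom.fst G (Perm ι)) := by
    rw [closure_le]
    intro s hs
    obtain ⟨σ, hσ⟩ := hS s hs
    exact ⟨(s, σ), hσ, rfl⟩
  have hex (h : closure S) : ∃ σ, ((h : G), σ) ∈ indexPermGraph φ p := by
    obtain ⟨⟨g, σ⟩, hg, hgh⟩ := hle h.2
    obtain rfl : g = h := hgh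
    exact ⟨σ, hg⟩
  choose f hf using hex
  exact ⟨MonoidHom.mk' f fun a b =>
    eq_of_mem_indexPermGraph hp (hf (a * b)) (mul_mem (hf a) (hf b)), hf⟩

end PermutationRepresentation

section Orbits

variable {G X : Type*} [Group G] [MulAction G X]

lemma orbit_closure_subset {S : Set G} {B : Set X} (hB : B.Finite)
    (hS : ∀ s ∈ S, ∀ b ∈ B, s • b ∈ B) {x : X} (hx : x ∈ B) : orbit (closure S) x ⊆ B := by
  have hle : closure S ≤ stabilizer G B :=
    (closure_le _).2 fun s hs => (mem_stabilizer_set' hB).2 (hS s hs)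
  rintro _ ⟨h, rfl⟩
  exact (mem_stabilizer_set.1 (hle h.2) x).2 hx

lemma card_eq_card_mul_ncard_orbit {K H : Subgroup G} (hKH : K ≤ H) :
    Nat.card H = Nat.card K * (orbit H ((1 : G) : G ⧸ K)).ncard := by
  have hstab : stabilizer H ((1 : G) : G ⧸ K) = K.subgroupOf H := by
    ext h
    rw [mem_subgroupOf, ← SetLike.ext_iff.1 (stabilizer_quotient K)]
    rfl
  rw [← index_stabilizer, hstab, ← Nat.card_congr (subgroupOfEquivOfLe hKH).toEquiv,
    card_mul_index]

end Orbits

/-- The action of a group on its subgroups by conjugation. -/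
def conjSubgroupHom (G : Type*) [Group G] : G →* Perm (Subgroup G) :=
  (MulAction.toPermHom (MulAut G) (Subgroup G)).comp MulAut.conj

lemma conjSubgroupHom_zpowers {G : Type*} [Group G] (g x : G) :
    conjSubgroupHom G g (zpowers x) = zpowers (g * x * g⁻¹) :=
  MonoidHom.map_zpowers _ x

lemma mem_zpowers_iff_of_orderOf_eq_two {G : Type*} [Group G] {x z : G} (hz : orderOf z = 2) :
    x ∈ zpowers z ↔ x = 1 ∨ x = z := by
  classical
  have hfin : IsOfFinOrder z := orderOf_pos_iff.1 (by omega)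
  rw [hfin.mem_zpowers_iff_mem_range_orderOf, hz]
  simp [Finset.range_add_one, or_comm]

/-- `T` and `U` satisfy the relations of a standard pair of generators of `GL(2, 𝔽₃)`, the double
cover of the rotation group of the cube in which a quarter turn lifts to an element `U` of order
`8` and a half turn about an edge axis to the involution `T * U`. -/
structure OctahedralPair {G : Type*} [Group G] (T U : G) : Prop where
  pow_three : T ^ 3 = 1
  mul_sq : (T * U) ^ 2 = 1
  commute : Commute (U ^ 4) T
  orderOf_eq : orderOf U = 8

namespace OctahedralPair

variable {G : Type*} [Group G] {T U : G}

/-- The cyclic subgroup generated by `U ^ k * T * U ^ (-k)`; under `OctahedralPair T U` these are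
the four body diagonals of the cube. -/
def diagonal (T U : G) (k : Fin 4) : Subgroup G :=
  zpowers (U ^ (k : ℕ) * T * (U ^ (k : ℕ))⁻¹)

/-- The permutation `(1 3 2)` by which `T` permutes the diagonals, written so that
its product with that of `U` is visibly a transposition. -/
def diagonalPerm : Perm (Fin 4) := swap 3 0 * (finRotate 4)⁻¹

/-- Representatives of the cosets of `⟨U⟩` for an octahedral pair, one for each face of the cube:
the face fixed by `U`, its four neighbours in cyclic order, and the opposite face. -/
def faceRep (T U : G) : Fin 6 → G :=
  ![1, T, U * T, U ^ 2 * T, U ^ 3 * T, T * U ^ 3 * T]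

section Relations

lemma pow_eight (h : OctahedralPair T U) : U ^ 8 = 1 :=
  h.orderOf_eq ▸ pow_orderOf_eq_one U

lemma orderOf_pow_four (h : OctahedralPair T U) : orderOf (U ^ 4) = 2 := by
  rw [orderOf_pow_of_dvd (by simp) (by rw [h.orderOf_eq]; decide), h.orderOf_eq]

lemma T_mul_T (h : OctahedralPair T U) : T * T = T⁻¹ := by
  rw [eq_inv_iff_mul_eq_one, ← pow_three', h.pow_three]

lemma T_mul_U (h : OctahedralPair T U) : T * U = U⁻¹ * T⁻¹ := by
  rw [← mul_inv_rev, eq_inv_iff_mul_eq_one, ← sq, h.mul_sq]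

lemma U_mul_T_mul_U (h : OctahedralPair T U) : U * T * U = T⁻¹ := by
  rw [mul_assoc, h.T_mul_U, mul_inv_cancel_left]

lemma U_pow_four_inv (h : OctahedralPair T U) : (U ^ 4)⁻¹ = U ^ 4 := by
  rw [inv_eq_iff_mul_eq_one, ← pow_add, h.pow_eight]

lemma U_mul_T (h : OctahedralPair T U) : U * T = T⁻¹ * U⁻¹ :=
  eq_mul_inv_of_mul_eq h.U_mul_T_mul_U

lemma T_mul_U_sq_mul_T (h : OctahedralPair T U) : T * U ^ 2 * T = U⁻¹ * T * U⁻¹ :=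
  calc T * U ^ 2 * T = (T * U) * (U * T) := by rw [sq]; group
    _ = (U⁻¹ * T⁻¹) * (T⁻¹ * U⁻¹) := by rw [h.T_mul_U, h.U_mul_T]
    _ = U⁻¹ * (T * T)⁻¹ * U⁻¹ := by group
    _ = U⁻¹ * T * U⁻¹ := by rw [h.T_mul_T, inv_inv]

lemma T_mul_U_sq_mul_T_eq_pow (h : OctahedralPair T U) : T * U ^ 2 * T = U ^ 3 * T * U ^ 3 :=
  calc T * U ^ 2 * T = U ^ 3 * ((U ^ 4)⁻¹ * T) * U⁻¹ := by rw [h.T_mul_U_sq_mul_T]; group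
    _ = U ^ 3 * T * U ^ 3 := by rw [h.U_pow_four_inv, h.commute.eq]; group

end Relations

section Diagonals

lemma U_pow_three_conj (h : OctahedralPair T U) : U ^ 3 * T * (U ^ 3)⁻¹ = U⁻¹ * T * U :=
  calc U ^ 3 * T * (U ^ 3)⁻¹ = U⁻¹ * (U ^ 4 * T) * (U ^ 4)⁻¹ * U := by group
    _ = U⁻¹ * T * U := by rw [h.commute.eq, mul_assoc, mul_assoc, mul_assoc, mul_inv_cancel_left,
      mul_assoc]

lemma T_conj_diagonal_one (h : OctahedralPair T U) :
    T * (U * T * U⁻¹) * T⁻¹ = U ^ 3 * T * (U ^ 3)⁻¹ :=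
  calc T * (U * T * U⁻¹) * T⁻¹ = (T * U) * T * (T * U)⁻¹ := by group
    _ = U⁻¹ * T * U := by rw [h.T_mul_U]; group
    _ = U ^ 3 * T * (U ^ 3)⁻¹ := h.U_pow_three_conj.symm

lemma T_conj_diagonal_three (h : OctahedralPair T U) :
    T * (U ^ 3 * T * (U ^ 3)⁻¹) * T⁻¹ = (U ^ 2 * T * (U ^ 2)⁻¹)⁻¹ :=
  calc T * (U ^ 3 * T * (U ^ 3)⁻¹) * T⁻¹ = T * (U⁻¹ * (T * U)) * T⁻¹ := by
        rw [h.U_pow_three_conj, mul_assoc U⁻¹]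
    _ = T * (U ^ 4)⁻¹ * U ^ 2 * (T * T)⁻¹ := by rw [h.T_mul_U]; group
    _ = U ^ 4 * (T * U ^ 2 * T) := by
        rw [h.U_pow_four_inv, h.T_mul_T, inv_inv, ← h.commute.eq]; group
    _ = U ^ 2 * (U * T * U) * (U ^ 2)⁻¹ := by rw [h.T_mul_U_sq_mul_T]; group
    _ = (U ^ 2 * T * (U ^ 2)⁻¹)⁻¹ := by rw [h.U_mul_T_mul_U]; group

lemma U_mem_indexPermGraph (h : OctahedralPair T U) :
    (U, finRotate 4) ∈ indexPermGraph (conjSubgroupHom G) (diagonal T U) := by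
  rw [mem_indexPermGraph]
  intro k
  have hsucc : U * (U ^ (k : ℕ) * T * (U ^ (k : ℕ))⁻¹) * U⁻¹ =
      U ^ (k + 1 : ℕ) * T * (U ^ (k + 1 : ℕ))⁻¹ := by
    rw [pow_succ']; group
  rw [diagonal, conjSubgroupHom_zpowers, hsucc]
  have hfour : U ^ 4 * T * (U ^ 4)⁻¹ = U ^ 0 * T * (U ^ 0)⁻¹ := by
    rw [h.commute.eq, mul_inv_cancel_right]; group
  fin_cases k
  exacts [rfl, rfl, rfl, congrArg zpowers hfour]

lemma T_mem_indexPermGraph (h : OctahedralPair T U) :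
    (T, diagonalPerm) ∈ indexPermGraph (conjSubgroupHom G) (diagonal T U) := by
  have h0 : conjSubgroupHom G T (diagonal T U 0) = diagonal T U 0 := by
    simp [diagonal, conjSubgroupHom_zpowers]
  have h1 : conjSubgroupHom G T (diagonal T U 1) = diagonal T U 3 := by
    rw [diagonal, conjSubgroupHom_zpowers]
    exact congrArg zpowers (by simpa using h.T_conj_diagonal_one)
  have h3 : conjSubgroupHom G T (diagonal T U 3) = diagonal T U 2 := by
    rw [diagonal, conjSubgroupHom_zpowers]
    exact (congrArg zpowers h.T_conj_diagonal_three).trans zpowers_inv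
  have h2 : conjSubgroupHom G T (diagonal T U 2) = diagonal T U 1 := by
    rw [← h3, ← h1, ← Perm.mul_apply, ← Perm.mul_apply, ← map_mul, ← map_mul, ← pow_three',
      h.pow_three, map_one, Perm.one_apply]
  rw [mem_indexPermGraph]
  intro k
  fin_cases k
  exacts [h0, h1, h2, h3]

lemma exists_mem_indexPermGraph (h : OctahedralPair T U) (σ : Perm (Fin 4)) :
    ∃ g ∈ closure {T, U}, (g, σ) ∈ indexPermGraph (conjSubgroupHom G) (diagonal T U) := by
  let Γ := indexPermGraph (conjSubgroupHom G) (diagonal T U) ⊓ (closure {T, U}).prod ⊤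
  have hT : (T, diagonalPerm) ∈ Γ :=
    ⟨h.T_mem_indexPermGraph, subset_closure (by simp), trivial⟩
  have hU : (U, finRotate 4) ∈ Γ :=
    ⟨h.U_mem_indexPermGraph, subset_closure (by simp), trivial⟩
  have hswap : diagonalPerm * finRotate 4 = swap 3 0 := inv_mul_cancel_right _ _
  have hgen : closure {finRotate 4, swap 3 0} = ⊤ :=
    Perm.closure_cycle_adjacent_swap isCycle_finRotate support_finRotate 3
  have hle : closure {finRotate 4, swap 3 0} ≤ Γ.map (MonoidHom.snd G (Perm (Fin 4))) := by
    rw [closure_le, Set.pair_subset_iff]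
    exact ⟨⟨_, hU, rfl⟩, ⟨_, mul_mem hT hU, hswap⟩⟩
  obtain ⟨⟨g, _⟩, ⟨hgraph, hg, -⟩, rfl⟩ := hle (hgen ▸ mem_top σ)
  exact ⟨g, hg, hgraph⟩

lemma diagonal_zero_ne_one (h : OctahedralPair T U) : diagonal T U 0 ≠ diagonal T U 1 := by
  intro heq
  have hmem : U * T * U⁻¹ ∈ zpowers T := by
    have hone : U * T * U⁻¹ ∈ diagonal T U 1 := by simp [diagonal]
    rw [← heq] at hone
    simpa [diagonal] using hone
  have hcomm : Commute T (U * T * U⁻¹) := by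
    obtain ⟨n, hn⟩ := hmem
    exact hn ▸ (Commute.refl T).zpow_right n
  have hprod : T * (U * T * U⁻¹) = (U ^ 2)⁻¹ := by rw [h.U_mul_T, sq]; group
  have hsix : U ^ 6 = 1 := by
    rw [← inv_eq_one, pow_mul U 2 3, ← inv_pow, ← hprod, hcomm.mul_pow, conj_pow, h.pow_three,
      one_mul, mul_one, mul_inv_cancel]
  have := orderOf_dvd_of_pow_eq_one hsix
  rw [h.orderOf_eq] at this
  norm_num at this

lemma diagonal_injective (h : OctahedralPair T U) : Function.Injective (diagonal T U) := by
  intro i j hij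
  by_contra hne
  obtain ⟨σ, hi, hj⟩ :=
    is_two_pretransitive_iff.1 (Perm.isMultiplyPretransitive (Fin 4) 2) hne zero_ne_one
  obtain ⟨g, -, hg⟩ := h.exists_mem_indexPermGraph σ
  apply h.diagonal_zero_ne_one
  rw [← hi, ← hj, Perm.smul_def, Perm.smul_def, ← hg i, ← hg j, hij]

end Diagonals

section Faces

lemma T_mul_faceRep (h : OctahedralPair T U) (j : Fin 6) :
    ∃ i, ∃ n : ℕ, T * faceRep T U j = faceRep T U i * U ^ n := by
  have hnear : T * (U * T) = 1 * U ^ 7 := by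
    rw [h.U_mul_T, mul_inv_cancel_left, one_mul, inv_eq_iff_mul_eq_one, ← pow_succ', h.pow_eight]
  have hopposite : T * (T * U ^ 3 * T) = U ^ 2 * T * U ^ 5 :=
    calc T * (T * U ^ 3 * T) = T⁻¹ * U ^ 3 * T := by rw [← h.T_mul_T]; group
      _ = U * T * (U ^ 4 * T) := by rw [← h.U_mul_T_mul_U]; group
      _ = U * T⁻¹ * U ^ 4 := by rw [h.commute.eq, ← h.T_mul_T]; group
      _ = U ^ 2 * T * U ^ 5 := by rw [← h.U_mul_T_mul_U, sq]; group
  fin_cases j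
  · exact ⟨1, 0, by simp [faceRep]⟩
  · exact ⟨2, 1, by simp [faceRep, h.T_mul_T, h.U_mul_T_mul_U]⟩
  · exact ⟨0, 7, hnear⟩
  · exact ⟨4, 3, (mul_assoc T _ _).symm.trans h.T_mul_U_sq_mul_T_eq_pow⟩
  · exact ⟨5, 0, by simp [faceRep, mul_assoc]⟩
  · exact ⟨3, 5, hopposite⟩

lemma U_mul_faceRep (h : OctahedralPair T U) (j : Fin 6) :
    ∃ i, ∃ n : ℕ, U * faceRep T U j = faceRep T U i * U ^ n := by
  have hopposite : U * (T * U ^ 3 * T) = T * U ^ 3 * T * U ^ 3 :=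
    calc U * (T * U ^ 3 * T) = (U * T) * U ^ 3 * T := by group
      _ = (T * T) * U ^ 2 * T := by rw [h.U_mul_T, h.T_mul_T]; group
      _ = T * (U ^ 3 * T * U ^ 3) := by rw [← h.T_mul_U_sq_mul_T_eq_pow]; group
      _ = T * U ^ 3 * T * U ^ 3 := by group
  fin_cases j
  · exact ⟨0, 1, by simp [faceRep]⟩
  · exact ⟨2, 0, by simp [faceRep]⟩
  · exact ⟨3, 0, by simp [faceRep, sq, mul_assoc]⟩
  · exact ⟨4, 0, by simp [faceRep, pow_succ, mul_assoc]⟩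
  · exact ⟨1, 4, by simp [faceRep, ← h.commute.eq, ← mul_assoc, ← pow_succ']⟩
  · exact ⟨5, 3, hopposite⟩

lemma orbit_subset_range_faceRep (h : OctahedralPair T U) :
    orbit (closure {T, U}) ((1 : G) : G ⧸ zpowers U) ⊆
      Set.range fun j => ((faceRep T U j : G) : G ⧸ zpowers U) := by
  refine orbit_closure_subset (Set.finite_range _) ?_ ⟨0, rfl⟩
  rintro s hs _ ⟨j, rfl⟩
  obtain ⟨i, n, hij⟩ : ∃ i, ∃ n : ℕ, s * faceRep T U j = faceRep T U i * U ^ n := by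
    rcases hs with rfl | rfl
    exacts [h.T_mul_faceRep j, h.U_mul_faceRep j]
  refine ⟨i, ?_⟩
  change _ = ((s * faceRep T U j : G) : G ⧸ zpowers U)
  rw [hij, QuotientGroup.mk_mul_of_mem _ (npow_mem_zpowers U n)]

lemma card_closure_eq_eight_mul (h : OctahedralPair T U) :
    Nat.card (closure {T, U}) =
      8 * (orbit (closure {T, U}) ((1 : G) : G ⧸ zpowers U)).ncard := by
  have hle : zpowers U ≤ closure {T, U} := zpowers_le.2 (subset_closure (by simp))
  rw [card_eq_card_mul_ncard_orbit hle, Nat.card_zpowers, h.orderOf_eq]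

lemma finite_closure (h : OctahedralPair T U) : Finite (closure {T, U}) := by
  have hfinite := (Set.finite_range _).subset h.orbit_subset_range_faceRep
  have hpos := (Set.ncard_pos hfinite).2 (nonempty_orbit _)
  have hcard := h.card_closure_eq_eight_mul
  exact Nat.finite_of_card_ne_zero (by omega)

lemma card_closure_le (h : OctahedralPair T U) : Nat.card (closure {T, U}) ≤ 48 :=
  calc Nat.card (closure {T, U})
    _ = 8 * (orbit (closure {T, U}) ((1 : G) : G ⧸ zpowers U)).ncard := h.card_closure_eq_eight_mul
    _ ≤ 8 * (Set.range fun j => ((faceRep T U j : G) : G ⧸ zpowers U)).ncard := by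
        gcongr
        exacts [Set.finite_range _, h.orbit_subset_range_faceRep]
    _ ≤ 8 * Nat.card (Fin 6) := by
        gcongr
        exact Finite.card_range_le _
    _ = 48 := by rw [Nat.card_fin]

end Faces

lemma exists_surjective_hom_perm (h : OctahedralPair T U) :
    ∃ f : closure {T, U} →* Perm (Fin 4), Function.Surjective f ∧
      ∀ x : closure {T, U}, (x : G) = U ^ 4 → f x = 1 := by
  have hgen : ∀ s ∈ ({T, U} : Set G), ∃ σ,
      (s, σ) ∈ indexPermGraph (conjSubgroupHom G) (diagonal T U) := by
    rintro s (rfl | rfl)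
    exacts [⟨_, h.T_mem_indexPermGraph⟩, ⟨_, h.U_mem_indexPermGraph⟩]
  obtain ⟨f, hf⟩ := exists_hom_mem_indexPermGraph h.diagonal_injective hgen
  refine ⟨f, fun σ => ?_, fun x hx => ?_⟩
  · obtain ⟨g, hg, hgσ⟩ := h.exists_mem_indexPermGraph σ
    exact ⟨⟨g, hg⟩, eq_of_mem_indexPermGraph h.diagonal_injective (hf ⟨g, hg⟩) hgσ⟩
  · have hrotate : finRotate 4 ^ 4 = 1 := by decide
    have hmem := pow_mem h.U_mem_indexPermGraph 4
    rw [Prod.pow_mk, hrotate] at hmem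
    exact eq_of_mem_indexPermGraph h.diagonal_injective (hf x) (hx ▸ hmem)

theorem card_closure_and_exists_hom_perm (h : OctahedralPair T U) :
    Nat.card (closure {T, U}) = 48 ∧
      ∃ f : closure {T, U} →* Perm (Fin 4), Function.Surjective f ∧
        ∀ x, f x = 1 ↔ (x : G) = 1 ∨ (x : G) = U ^ 4 := by
  obtain ⟨f, hsurj, hker⟩ := h.exists_surjective_hom_perm
  have := h.finite_closure
  have hle := h.card_closure_le
  let z : closure {T, U} := ⟨U ^ 4, pow_mem (subset_closure (by simp)) 4⟩
  have hz : orderOf z = 2 := (Subgroup.orderOf_mk _ _).trans h.orderOf_pow_four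
  have hzker : zpowers z ≤ f.ker := zpowers_le.2 (hker z rfl)
  have hcard : Nat.card f.ker * 24 = Nat.card (closure {T, U}) := by
    rw [← f.ker.card_mul_index, index_ker, MonoidHom.range_eq_top.2 hsurj, card_top, Nat.card_perm,
      Nat.card_fin]
    rfl
  have htwo : Nat.card (zpowers z) = 2 := (Nat.card_zpowers z).trans hz
  have hge := htwo ▸ card_le_of_le hzker
  have heq : zpowers z = f.ker := eq_of_le_of_card_ge hzker (by omega)
  refine ⟨by omega, f, hsurj, fun x => ?_⟩
  rw [← MonoidHom.mem_ker, ← heq, mem_zpowers_iff_of_orderOf_eq_two hz, Subtype.ext_iff,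
    Subtype.ext_iff, coe_one]

end OctahedralPair

section Matrices

variable {R K : Type*} [CommRing R] [Field K]

lemma fin_two_pow_three_of_sq_eq_neg_one {i : R} (hi : i ^ 2 = -1) :
    !![1, 1; i, -i] ^ 3 = (2 + 2 * i) • (1 : Matrix (Fin 2) (Fin 2) R) := by
  simp only [pow_three, Matrix.mul_fin_two, Matrix.one_fin_two]
  ext a b
  fin_cases a <;> fin_cases b <;> simp <;> grind

lemma fin_two_diagonal_pow_four_of_sq_eq_neg_one {i : R} (hi : i ^ 2 = -1) :
    !![i - 1, 0; 0, i + 1] ^ 4 = (-4 : R) • (1 : Matrix (Fin 2) (Fin 2) R) := by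
  simp only [pow_succ, pow_zero, one_mul, Matrix.mul_fin_two, Matrix.one_fin_two]
  ext a b
  fin_cases a <;> fin_cases b <;> simp <;> grind

lemma fin_two_mul_diagonal_sq_of_sq_eq_neg_one {i : R} (hi : i ^ 2 = -1) :
    (!![1, 1; i, -i] * !![i - 1, 0; 0, i + 1]) ^ 2 =
      (-4 * i) • (1 : Matrix (Fin 2) (Fin 2) R) := by
  simp only [sq, Matrix.mul_fin_two, Matrix.one_fin_two]
  ext a b
  fin_cases a <;> fin_cases b <;> simp <;> grind

variable {i r : K} {T U : GL (Fin 2) K}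

lemma pow_four_eq_neg_one_of_coe_eq (hi : i ^ 2 = -1) (hr : 2 * r ^ 2 = 1)
    (hU : (U : Matrix (Fin 2) (Fin 2) K) = r • !![i - 1, 0; 0, i + 1]) : U ^ 4 = -1 := by
  have hscalar : r ^ 4 * -4 = -1 := by linear_combination (-2 * r ^ 2 - 1) * hr
  ext1
  rw [Units.val_pow_eq_pow_val, hU, smul_pow, fin_two_diagonal_pow_four_of_sq_eq_neg_one hi,
    smul_smul, hscalar, neg_one_smul, Units.val_neg, Units.val_one]

lemma pow_three_eq_one_of_coe_eq (hi : i ^ 2 = -1) (htwo : (2 : K) ≠ 0)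
    (hT : (T : Matrix (Fin 2) (Fin 2) K) = ((i - 1) * i / 2) • !![1, 1; i, -i]) : T ^ 3 = 1 := by
  have hscalar : ((i - 1) * i / 2) ^ 3 * (2 + 2 * i) = 1 := by
    field_simp
    grind
  ext1
  rw [Units.val_pow_eq_pow_val, hT, smul_pow, fin_two_pow_three_of_sq_eq_neg_one hi, smul_smul,
    hscalar, one_smul, Units.val_one]

lemma mul_sq_eq_one_of_coe_eq (hi : i ^ 2 = -1) (hr : 2 * r ^ 2 = 1)
    (hT : (T : Matrix (Fin 2) (Fin 2) K) = ((i - 1) * i / 2) • !![1, 1; i, -i])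
    (hU : (U : Matrix (Fin 2) (Fin 2) K) = r • !![i - 1, 0; 0, i + 1]) : (T * U) ^ 2 = 1 := by
  have htwo : (2 : K) ≠ 0 := left_ne_zero_of_mul_eq_one hr
  have hscalar : ((i - 1) * i / 2 * r) ^ 2 * (-4 * i) = 1 := by
    field_simp
    grind
  ext1
  rw [Units.val_pow_eq_pow_val, Units.val_mul, hT, hU, smul_mul_smul_comm, smul_pow,
    fin_two_mul_diagonal_sq_of_sq_eq_neg_one hi, smul_smul, hscalar, one_smul, Units.val_one]

lemma octahedralPair_of_coe_eq (hi : i ^ 2 = -1) (hr : 2 * r ^ 2 = 1)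
    (hT : (T : Matrix (Fin 2) (Fin 2) K) = ((i - 1) * i / 2) • !![1, 1; i, -i])
    (hU : (U : Matrix (Fin 2) (Fin 2) K) = r • !![i - 1, 0; 0, i + 1]) : OctahedralPair T U := by
  have hU4 : U ^ 4 = -1 := pow_four_eq_neg_one_of_coe_eq hi hr hU
  have htwo : (2 : K) ≠ 0 := left_ne_zero_of_mul_eq_one hr
  have hneg : (-1 : GL (Fin 2) K) ≠ 1 := by
    intro h
    have hentry : (-1 : K) = 1 := by simpa using congrArg (fun g : GL (Fin 2) K => g 0 0) h
    exact htwo (by linear_combination -hentry)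
  have hpow_four : U ^ 4 ≠ 1 := hU4.trans_ne hneg
  have hpow_eight : U ^ 8 = 1 := by rw [pow_mul U 4 2, hU4, neg_one_sq]
  exact
    { pow_three := pow_three_eq_one_of_coe_eq hi htwo hT
      mul_sq := mul_sq_eq_one_of_coe_eq hi hr hT hU
      commute := hU4 ▸ Commute.neg_one_left T
      orderOf_eq := orderOf_eq_prime_pow (p := 2) (n := 2) hpow_four hpow_eight }

end Matrices

lemma perm_fin_four_prod_pow_twelve (x : Perm (Fin 4) × Multiplicative (ZMod 2)) : x ^ 12 = 1 := by
  have hperm : ∀ σ : Perm (Fin 4), σ ^ 12 = 1 := by decide +kernel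
  have hzmod : ∀ y : Multiplicative (ZMod 2), y ^ 12 = 1 := by decide
  exact Prod.ext (hperm _) (hzmod _)

lemma not_nonempty_mulEquiv_of_orderOf_eq_eight {G : Type*} [Group G] {g : G}
    (hg : orderOf g = 8) : ¬ Nonempty (G ≃* Perm (Fin 4) × Multiplicative (ZMod 2)) := by
  rintro ⟨e⟩
  have hdvd := orderOf_dvd_of_pow_eq_one (perm_fin_four_prod_pow_twelve (e g))
  rw [e.orderOf_eq, hg] at hdvd
  norm_num at hdvd

theorem octahedral_extendable_group_general {K : Type*} [Field K] {i r : K}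
    (hi : i ^ 2 = -1) (hr : 2 * r ^ 2 = 1) {T U : GL (Fin 2) K}
    (hT : (T : Matrix (Fin 2) (Fin 2) K) = ((i - 1) * i / 2) • !![1, 1; i, -i])
    (hU : (U : Matrix (Fin 2) (Fin 2) K) = r • !![i - 1, 0; 0, i + 1]) :
    orderOf U = 8 ∧ U ^ 4 = -1 ∧
    Nat.card (closure {T, U}) = 48 ∧
    (∃ f : closure {T, U} →* Perm (Fin 4), Function.Surjective f ∧
      ∀ h : closure {T, U}, f h = 1 ↔ (h : GL (Fin 2) K) = 1 ∨ (h : GL (Fin 2) K) = -1) ∧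
    (∃ h : closure {T, U}, orderOf h = 8) ∧
    ¬ Nonempty (closure {T, U} ≃* Perm (Fin 4) × Multiplicative (ZMod 2)) := by
  have hpair : OctahedralPair T U := octahedralPair_of_coe_eq hi hr hT hU
  have hU4 : U ^ 4 = -1 := pow_four_eq_neg_one_of_coe_eq hi hr hU
  obtain ⟨hcard, hhom⟩ := hpair.card_closure_and_exists_hom_perm
  have horder : orderOf (⟨U, subset_closure (by simp)⟩ : closure {T, U}) = 8 :=
    (Subgroup.orderOf_mk U _).trans hpair.orderOf_eq
  exact ⟨hpair.orderOf_eq, hU4, hcard, hU4 ▸ hhom, ⟨_, horder⟩,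
    not_nonempty_mulEquiv_of_orderOf_eq_eight horder⟩

lemma two_mul_inv_ofReal_sqrt_two_sq : 2 * ((Real.sqrt 2 : ℝ) : ℂ)⁻¹ ^ 2 = 1 := by
  rw [inv_pow, ← Complex.ofReal_pow, Real.sq_sqrt zero_le_two]
  norm_num

/-- Let `T = ((i−1)i/2)·[[1,1],[i,−i]]` and `U = (1/√2)·[[i−1,0],[0,i+1]]` in
`GL(2, ℂ)` and let `H = ⟨T, U⟩`.  Then `U` has order 8, `U⁴ = −Id`, `H` has order 48,
and there is a surjection `H → S₄` with kernel exactly `{Id, −Id}`; in particular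
`H` contains an element of order 8 and is not isomorphic to `S₄ × ℤ/2`. -/
theorem octahedral_extendable_group (T U : GL (Fin 2) ℂ)
    (hT : (T : Matrix (Fin 2) (Fin 2) ℂ) =
      ((Complex.I - 1) * Complex.I / 2) • !![1, 1; Complex.I, -Complex.I])
    (hU : (U : Matrix (Fin 2) (Fin 2) ℂ) =
      (((Real.sqrt 2 : ℝ) : ℂ))⁻¹ • !![Complex.I - 1, 0; 0, Complex.I + 1]) :
    orderOf U = 8 ∧ U ^ 4 = -1 ∧
    Nat.card (Subgroup.closure {T, U} : Subgroup (GL (Fin 2) ℂ)) = 48 ∧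
    (∃ f : (Subgroup.closure {T, U} : Subgroup (GL (Fin 2) ℂ)) →* Equiv.Perm (Fin 4),
      Function.Surjective f ∧
      ∀ h : (Subgroup.closure {T, U} : Subgroup (GL (Fin 2) ℂ)),
        f h = 1 ↔ ((h : GL (Fin 2) ℂ) = 1 ∨ (h : GL (Fin 2) ℂ) = -1)) ∧
    (∃ h : (Subgroup.closure {T, U} : Subgroup (GL (Fin 2) ℂ)), orderOf h = 8) ∧
    ¬ Nonempty ((Subgroup.closure {T, U} : Subgroup (GL (Fin 2) ℂ)) ≃*
        Equiv.Perm (Fin 4) × Multiplicative (ZMod 2)) := by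
  exact octahedral_extendable_group_general Complex.I_sq two_mul_inv_ofReal_sqrt_two_sq hT hU
end

section
/- Let M₁ = diag(e^{2πi/3}, e^{iπ/3}) and M₂ = diag(−e^{2πi/3}, −e^{iπ/3}) in GL(2, ℂ). Then: M₁ and M₂ each have order 6; the cyclic subgroups G₁ = ⟨M₁⟩ and G₂ = ⟨M₂⟩ are distinct; neither G₁ nor G₂ contains −Id (so the projection π : GL(2, ℂ) → PGL(2, ℂ) is injective on each); and π(G₁) = π(G₂). (Lemma: for the pair (K, B) = (ℤ/6, {x₁⁶ − x₀⁶ = 0}), K is splitting and has exactly these two liftings into ℤ/12 ⊂ GL(2, ℂ).) -/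
/-!
The ratio of the eigenvalues of `diag(a, b)` is a homomorphism from the diagonal torus whose kernel
is the group of scalar matrices, so the order of `diag(a, b)` in `PGL₂` is the order of `a / b`.
If `a ^ n = b ^ n = 1` and `a / b` is a primitive `n`-th root of unity, then `diag(a, b)` also has
order `n` in `GL₂`, so the projection is injective on the subgroup it generates, which therefore
cannot contain the nontrivial scalar `-1`. For even `n` all of this applies to `-diag(a, b)`
as well, which has the same image in `PGL₂`; the two cyclic groups differ because one containing
both generators would contain `-1`.
-/

section CyclicSubgroups

variable {G H : Type*} [Group G] [Group H] {f : G →* H} {x : G}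

theorem orderOf_eq_of_pow_eq_one_of_orderOf_map_eq {n : ℕ} (hx : x ^ n = 1)
    (hfx : orderOf (f x) = n) : orderOf x = n :=
  Nat.dvd_antisymm (orderOf_dvd_of_pow_eq_one hx) (hfx ▸ orderOf_map_dvd f x)

theorem eq_one_of_mem_zpowers_of_map_eq_one (hx : orderOf (f x) = orderOf x) {g : G}
    (hg : g ∈ Subgroup.zpowers x) (hfg : f g = 1) : g = 1 := by
  obtain ⟨k, rfl⟩ := hg
  rwa [map_zpow, ← orderOf_dvd_iff_zpow_eq_one, hx, orderOf_dvd_iff_zpow_eq_one] at hfg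

variable [HasDistribNeg G]

theorem map_neg_of_map_neg_one_eq_one (hf : f (-1) = 1) (x : G) : f (-x) = f x := by
  rw [← neg_one_mul, map_mul, hf, one_mul]

theorem neg_one_notMem_zpowers (hG : (-1 : G) ≠ 1) (hf : f (-1) = 1)
    (hx : orderOf (f x) = orderOf x) : (-1 : G) ∉ Subgroup.zpowers x :=
  fun hmem ↦ hG (eq_one_of_mem_zpowers_of_map_eq_one hx hmem hf)

theorem zpowers_ne_zpowers_neg (hx : (-1 : G) ∉ Subgroup.zpowers x) :
    Subgroup.zpowers x ≠ Subgroup.zpowers (-x) := by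
  intro heq
  have hneg : x * -1 ∈ Subgroup.zpowers x := by
    rw [mul_neg_one, heq]
    exact Subgroup.mem_zpowers (-x)
  exact hx ((Subgroup.mul_mem_cancel_left _ (Subgroup.mem_zpowers x)).1 hneg)

theorem neg_one_mem_center : (-1 : G) ∈ Subgroup.center G :=
  Subgroup.mem_center_iff.2 fun g ↦ (Commute.neg_one_right g).eq

end CyclicSubgroups

section DiagonalMatrices

variable {ι R : Type*} [Fintype ι] [DecidableEq ι] [CommRing R] {M : GL ι R} {d : ι → R}

theorem val_pow_eq_diagonal (hM : M.val = Matrix.diagonal d) (k : ℕ) :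
    (M ^ k).val = Matrix.diagonal (d ^ k) := by
  rw [Units.val_pow_eq_pow_val, hM, Matrix.diagonal_pow]

theorem pow_eq_one_of_val_eq_diagonal (hM : M.val = Matrix.diagonal d) {k : ℕ} (hd : d ^ k = 1) :
    M ^ k = 1 :=
  Units.ext <| by rw [val_pow_eq_diagonal hM, hd, Matrix.diagonal_one', Units.val_one]

theorem mem_center_iff_of_val_eq_diagonal (hM : M.val = Matrix.diagonal d) :
    M ∈ Subgroup.center (GL ι R) ↔ ∀ i j, d i = d j := by
  rw [Matrix.GeneralLinearGroup.mem_center_iff_val_mem_range_scalar, hM]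
  constructor
  · rintro ⟨r, hr⟩ i j
    have hconst : (fun _ ↦ r) = d := Matrix.diagonal_injective hr
    simp only [← hconst]
  · intro hd
    cases isEmpty_or_nonempty ι with
    | inl _ => exact ⟨0, Subsingleton.elim _ _⟩
    | inr hι =>
      obtain ⟨i⟩ := hι
      exact ⟨d i, congrArg Matrix.diagonal (funext (hd i))⟩

theorem neg_one_ne_one_of_two_ne_zero [Nonempty ι] [NeZero (2 : R)] : (-1 : GL ι R) ≠ 1 := by
  intro h
  obtain ⟨i⟩ := ‹Nonempty ι›
  have hentry : (-1 : R) = 1 := by simpa using congrArg (fun g : GL ι R ↦ g.val i i) h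
  rw [neg_eq_iff_add_eq_zero, one_add_one_eq_two] at hentry
  exact two_ne_zero hentry

end DiagonalMatrices

section ProjectiveLinearGroup

variable {K : Type*} [Field K] {M : GL (Fin 2) K} {a b : K}

theorem orderOf_mk_center_eq_orderOf_div (hM : M.val = Matrix.diagonal ![a, b]) :
    orderOf (QuotientGroup.mk' (Subgroup.center (GL (Fin 2) K)) M) = orderOf (a / b) := by
  have hb : b ≠ 0 := by
    rintro rfl
    simpa [hM] using M.isUnit.map Matrix.detMonoidHom
  refine orderOf_eq_orderOf_iff.2 fun k ↦ ?_
  rw [← map_pow, QuotientGroup.mk'_apply, QuotientGroup.eq_one_iff,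
    mem_center_iff_of_val_eq_diagonal (val_pow_eq_diagonal hM k), div_pow,
    div_eq_one_iff_eq (pow_ne_zero k hb)]
  simp [Fin.forall_fin_two, eq_comm]

theorem two_liftings_Z6_general [NeZero (2 : K)] {n : ℕ} (hn : Even n)
    (hM : M.val = Matrix.diagonal ![a, b]) (ha : a ^ n = 1) (hb : b ^ n = 1)
    (hab : IsPrimitiveRoot (a / b) n) :
    let π := QuotientGroup.mk' (Subgroup.center (GL (Fin 2) K))
    orderOf M = n ∧ orderOf (-M) = n ∧
    Subgroup.zpowers M ≠ Subgroup.zpowers (-M) ∧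
    -1 ∉ Subgroup.zpowers M ∧
    -1 ∉ Subgroup.zpowers (-M) ∧
    (∀ g ∈ Subgroup.zpowers M, π g = 1 → g = 1) ∧
    (∀ g ∈ Subgroup.zpowers (-M), π g = 1 → g = 1) ∧
    Subgroup.map π (Subgroup.zpowers M) = Subgroup.map π (Subgroup.zpowers (-M)) := by
  intro π
  have hπ : π (-1) = 1 := (QuotientGroup.eq_one_iff _).2 neg_one_mem_center
  have hπ_neg : π (-M) = π M := map_neg_of_map_neg_one_eq_one hπ M
  have hπM : orderOf (π M) = n := (orderOf_mk_center_eq_orderOf_div hM).trans hab.eq_orderOf.symm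
  have hπM_neg : orderOf (π (-M)) = n := hπ_neg ▸ hπM
  have hpow : M ^ n = 1 :=
    pow_eq_one_of_val_eq_diagonal hM (by ext i; fin_cases i <;> simp [ha, hb])
  have hord : orderOf M = n := orderOf_eq_of_pow_eq_one_of_orderOf_map_eq hpow hπM
  have hord_neg : orderOf (-M) = n :=
    orderOf_eq_of_pow_eq_one_of_orderOf_map_eq (hn.neg_pow M ▸ hpow) hπM_neg
  have hfaithful : orderOf (π M) = orderOf M := hπM.trans hord.symm
  have hfaithful_neg : orderOf (π (-M)) = orderOf (-M) := hπM_neg.trans hord_neg.symm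
  have hmem := neg_one_notMem_zpowers neg_one_ne_one_of_two_ne_zero hπ hfaithful
  have hmem_neg := neg_one_notMem_zpowers neg_one_ne_one_of_two_ne_zero hπ hfaithful_neg
  refine ⟨hord, hord_neg, zpowers_ne_zpowers_neg hmem, hmem, hmem_neg,
    fun _ ↦ eq_one_of_mem_zpowers_of_map_eq_one hfaithful,
    fun _ ↦ eq_one_of_mem_zpowers_of_map_eq_one hfaithful_neg, ?_⟩
  rw [MonoidHom.map_zpowers, MonoidHom.map_zpowers, hπ_neg]

end ProjectiveLinearGroup

theorem isPrimitiveRoot_exp_pi_mul_I_div_three :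
    IsPrimitiveRoot (Complex.exp (Real.pi * Complex.I / 3)) 6 := by
  convert Complex.isPrimitiveRoot_exp 6 (by norm_num) using 2
  push_cast
  ring

theorem exp_two_pi_mul_I_div_three :
    Complex.exp (2 * Real.pi * Complex.I / 3) = Complex.exp (Real.pi * Complex.I / 3) ^ 2 := by
  rw [← Complex.exp_nat_mul]
  congr 1
  push_cast
  ring

/-- Let `M₁ = diag(e^{2πi/3}, e^{iπ/3})` and `M₂ = diag(−e^{2πi/3}, −e^{iπ/3})` in
`GL(2, ℂ)`.  Then `M₁` and `M₂` each have order 6, the cyclic subgroups `G₁ = ⟨M₁⟩`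
and `G₂ = ⟨M₂⟩` are distinct, neither contains `−Id` (so `π` is injective on each),
and `π(G₁) = π(G₂)`. -/
theorem two_liftings_Z6 (M₁ M₂ : GL (Fin 2) ℂ)
    (h₁ : (M₁ : Matrix (Fin 2) (Fin 2) ℂ) = Matrix.diagonal
      ![Complex.exp (2 * Real.pi * Complex.I / 3), Complex.exp (Real.pi * Complex.I / 3)])
    (h₂ : (M₂ : Matrix (Fin 2) (Fin 2) ℂ) = Matrix.diagonal
      ![-Complex.exp (2 * Real.pi * Complex.I / 3), -Complex.exp (Real.pi * Complex.I / 3)]) :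
    orderOf M₁ = 6 ∧ orderOf M₂ = 6 ∧
    Subgroup.zpowers M₁ ≠ Subgroup.zpowers M₂ ∧
    (-1 : GL (Fin 2) ℂ) ∉ Subgroup.zpowers M₁ ∧
    (-1 : GL (Fin 2) ℂ) ∉ Subgroup.zpowers M₂ ∧
    (∀ g ∈ Subgroup.zpowers M₁, projGL2 g = 1 → g = 1) ∧
    (∀ g ∈ Subgroup.zpowers M₂, projGL2 g = 1 → g = 1) ∧
    Subgroup.map projGL2 (Subgroup.zpowers M₁) = Subgroup.map projGL2 (Subgroup.zpowers M₂) := by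
  have hζ := isPrimitiveRoot_exp_pi_mul_I_div_three
  rw [exp_two_pi_mul_I_div_three] at h₁ h₂
  set ζ := Complex.exp (Real.pi * Complex.I / 3)
  have hneg : M₂ = -M₁ := Units.ext <| by
    rw [Units.val_neg, h₁, h₂, Matrix.diagonal_neg]
    simp
  have hratio : ζ ^ 2 / ζ = ζ := by rw [sq, mul_self_div_self]
  have hζsq : (ζ ^ 2) ^ 6 = 1 := by rw [pow_right_comm, hζ.pow_eq_one, one_pow]
  rw [hneg]
  exact two_liftings_Z6_general (by decide) h₁ hζsq hζ.pow_eq_one (hratio.symm ▸ hζ)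
end
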